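/- Linear symplectic capacity of an ellipsoid: Let M be a real symmetric positive-definite 2n×2n matrix with largest symplectic eigenvalue λ₁, and let R > 0. Then there exists S ∈ Sp(2n,ℝ) such that S maps the closed Euclidean ball B(R) = {z ∈ ℝ²ⁿ : |z| ≤ R} into the ellipsoid {z ∈ ℝ²ⁿ : Mz·z ≤ 1} if and only if R² λ₁ ≤ 1. Consequently sup{πR² : ∃ S ∈ Sp(2n,ℝ), S(B(R)) ⊆ {Mz·z ≤ 1}} = π/λ₁. -/

import Mathlib

open Matrix Polynomial

/-- The standard symplectic matrix `J = [[0, Iₙ], [-Iₙ, 0]]`, with rows/columns indexed by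
`Fin n ⊕ Fin n` (positions first, momenta second). -/
def Jmat (n : ℕ) : Matrix (Fin n ⊕ Fin n) (Fin n ⊕ Fin n) ℝ :=
  Matrix.fromBlocks 0 1 (-1) 0

/-- `S` is symplectic: `Sᵀ J S = J`. -/
def IsSymplectic {n : ℕ} (S : Matrix (Fin n ⊕ Fin n) (Fin n ⊕ Fin n) ℝ) : Prop :=
  Sᵀ * Jmat n * S = Jmat n

/-!
For symplectic `S`, the inclusion `S (B R) ⊆ {Mz·z ≤ 1}` says `Sᵀ M S ≤ R⁻²` in the Loewner order,
and `Sᵀ M S` has the same symplectic eigenvalues `λ_j` as `M`. These are bounded by the largest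
eigenvalue: if `N ≤ c` then `√N Jᵀ N J √N ≤ c N ≤ c²`, and the left side has eigenvalues `λ_j²`.
The bound is attained by `S = √P`, where `P` is the positive definite solution of the Riccati
equation `P M P = Jᵀ M J`: uniqueness of positive semidefinite solutions makes `P` and `S`
symplectic, and `(Sᵀ M S)²` is similar to `M P M P = M Jᵀ M J`, with eigenvalues `λ_j²` again.
-/

section CharacteristicPolynomial

variable {ι R : Type*} [Fintype ι] [DecidableEq ι] [CommRing R]

theorem charpoly_comp (A : Matrix ι ι R) (q : R[X]) :
    A.charpoly.comp q = (scalar ι q - A.map C).det := by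
  rw [← eval_charpoly, charpoly_map, eval_map, Polynomial.comp]

theorem charpoly_neg_sq_comp (A : Matrix ι ι R) :
    (-A ^ 2).charpoly.comp (-X ^ 2) = A.charpoly * A.charpoly.comp (-X) := by
  have hcomm : Commute (scalar ι (X : R[X])) (A.map C) := scalar_commute _ (Commute.all _) _
  calc (-A ^ 2).charpoly.comp (-X ^ 2)
      = ((scalar ι X - A.map C) * (scalar ι (-X) - A.map C)).det := by
        rw [charpoly_comp, show (-A ^ 2).map C = -(A.map C) ^ 2 by
          simp only [← RingHom.mapMatrix_apply, map_neg, map_pow]]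
        congr 1
        simp only [map_neg, map_mul, sub_mul, mul_sub, mul_neg, hcomm.eq, sq]
        abel
    _ = A.charpoly * A.charpoly.comp (-X) := by
        rw [det_mul, ← charpoly_comp, ← charpoly_comp, comp_X]

theorem comp_neg_X_sq_injective : Function.Injective fun p : R[X] ↦ p.comp (-X ^ 2) := by
  intro p q hpq
  have hexpand (f : R[X]) : f.comp (-X ^ 2) = expand R 2 (f.comp (-X)) := by
    rw [expand_eq_comp_X_pow, comp_assoc, neg_comp, X_comp]
  simp only [hexpand] at hpq
  simpa only [comp_neg_X_comp_neg_X] using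
    congrArg (fun f : R[X] ↦ f.comp (-X)) (expand_injective two_pos hpq)

theorem charpoly_neg_sq_of_charpoly_eq_prod {κ : Type*} [Fintype κ] {A : Matrix ι ι R} {a : κ → R}
    (h : A.charpoly = ∏ j, (X ^ 2 + C (a j))) :
    (-A ^ 2).charpoly = (∏ j, (X - C (a j))) ^ 2 := by
  refine comp_neg_X_sq_injective ?_
  simp only [charpoly_neg_sq_comp, h, pow_comp, prod_comp, ← Finset.prod_pow,
    ← Finset.prod_mul_distrib]
  refine Finset.prod_congr rfl fun j _ ↦ ?_
  simp only [add_comp, sub_comp, pow_comp, X_comp, C_comp]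
  ring

end CharacteristicPolynomial

section LoewnerOrder

open scoped MatrixOrder

variable {ι : Type*} [Fintype ι] [DecidableEq ι]

theorem le_smul_one_iff_forall_isRoot_charpoly {A : Matrix ι ι ℝ} (hA : A.IsHermitian) (c : ℝ) :
    A ≤ c • 1 ↔ ∀ x, A.charpoly.IsRoot x → x ≤ c := by
  simp only [← Algebra.algebraMap_eq_smul_one, ← mem_spectrum_iff_isRoot_charpoly]
  exact le_algebraMap_iff_spectrum_le hA.isSelfAdjoint

theorem le_smul_one_of_sq_le {A : Matrix ι ι ℝ} (hA : A.IsHermitian) {c : ℝ} (hc : 0 ≤ c)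
    (h : A ^ 2 ≤ c ^ 2 • 1) : A ≤ c • 1 := by
  rw [← Algebra.algebraMap_eq_smul_one,
    le_algebraMap_iff_spectrum_le (by cfc_tac)] at h ⊢
  exact fun x hx ↦ (abs_le_of_sq_le_sq' (h _ (spectrum.pow_mem_pow A 2 hx)) hc).2

theorem le_smul_one_iff_forall_dotProduct_le {A : Matrix ι ι ℝ} (hA : A.IsHermitian) (c : ℝ) :
    A ≤ c • 1 ↔ ∀ z, z ⬝ᵥ A *ᵥ z ≤ c * (z ⬝ᵥ z) := by
  have hdiff : (c • 1 - A).IsHermitian := (isHermitian_one.smul (IsSelfAdjoint.all c)).sub hA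
  simp only [le_iff, posSemidef_iff_dotProduct_mulVec, hdiff, true_and, star_trivial, sub_mulVec,
    smul_mulVec, one_mulVec, dotProduct_sub, dotProduct_smul, smul_eq_mul, sub_nonneg]

theorem forall_sqrt_sum_sq_le_imp_iff {A : Matrix ι ι ℝ} (hA : A.IsHermitian) {R : ℝ} (hR : 0 < R) :
    (∀ z, √(∑ i, z i ^ 2) ≤ R → z ⬝ᵥ A *ᵥ z ≤ 1) ↔ A ≤ (R ^ 2)⁻¹ • 1 := by
  have hsum (z : ι → ℝ) : ∑ i, z i ^ 2 = z ⬝ᵥ z := by simp only [dotProduct, sq]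
  simp only [le_smul_one_iff_forall_dotProduct_le hA, hsum, Real.sqrt_le_left hR.le]
  refine ⟨fun h z ↦ ?_, fun h z hz ↦ (h z).trans ?_⟩
  · rcases eq_or_ne z 0 with rfl | hz
    · simp
    have hzz : 0 < z ⬝ᵥ z := by simpa using dotProduct_star_self_pos_iff.2 hz
    have hscale : (R / √(z ⬝ᵥ z)) ^ 2 = R ^ 2 / (z ⬝ᵥ z) := by
      rw [div_pow, Real.sq_sqrt hzz.le]
    have hquad := h ((R / √(z ⬝ᵥ z)) • z)
    simp only [mulVec_smul, smul_dotProduct, dotProduct_smul, smul_eq_mul, ← mul_assoc, ← sq,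
      hscale, div_mul_cancel₀ _ hzz.ne', le_refl, forall_const] at hquad
    rwa [inv_mul_eq_div, le_div_iff₀ (by positivity), mul_comm, ← div_le_one hzz,
      mul_div_right_comm]
  · rwa [inv_mul_le_one₀ (by positivity)]

end LoewnerOrder

section Riccati

open scoped MatrixOrder ComplexOrder

variable {ι 𝕜 : Type*} [Fintype ι] [RCLike 𝕜] {M A P Q : Matrix ι ι 𝕜}

theorem posDef_sqrt [DecidableEq ι] (hM : M.PosDef) : (CFC.sqrt M).PosDef :=
  hM.isStrictlyPositive.sqrt.posDef

theorem posSemidef_eq_of_mul_mul_self_eq (hM : M.PosDef) (hP : P.PosSemidef) (hQ : Q.PosSemidef)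
    (h : P * M * P = Q * M * Q) : P = Q := by
  classical
  set B := CFC.sqrt M
  have hB : B.PosDef := posDef_sqrt hM
  have hBB : B * B = M := CFC.sqrt_mul_sqrt_self M hM.posSemidef.nonneg
  have hconj {X : Matrix ι ι 𝕜} (hX : X.PosSemidef) : 0 ≤ B * X * B := by
    simpa only [hB.isHermitian.eq] using (hX.conjTranspose_mul_mul_same B).nonneg
  have hsq (X : Matrix ι ι 𝕜) : B * X * B * (B * X * B) = B * (X * M * X) * B := by
    simp only [← hBB, mul_assoc]
  have hBPB : B * P * B = B * Q * B :=
    (CFC.mul_self_eq_mul_self_iff _ _ (hconj hP) (hconj hQ)).1 (by rw [hsq, hsq, h])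
  exact hB.isUnit.mul_left_cancel (hB.isUnit.mul_right_cancel hBPB)

/-- The solution is the matrix geometric mean of `M⁻¹` and `A`. -/
theorem exists_posDef_mul_mul_self_eq (hM : M.PosDef) (hA : A.PosDef) :
    ∃ P : Matrix ι ι 𝕜, P.PosDef ∧ P * M * P = A := by
  classical
  set B := CFC.sqrt M
  have hB : B.PosDef := posDef_sqrt hM
  have hBB : B * B = M := CFC.sqrt_mul_sqrt_self M hM.posSemidef.nonneg
  have hBdet : IsUnit B.det := (isUnit_iff_isUnit_det B).1 hB.isUnit
  have hBAB : (B * A * B).PosDef := by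
    simpa only [hB.isHermitian.eq] using
      hA.conjTranspose_mul_mul_same (mulVec_injective_of_isUnit hB.isUnit)
  set D := CFC.sqrt (B * A * B)
  have hDD : D * D = B * A * B := CFC.sqrt_mul_sqrt_self _ hBAB.posSemidef.nonneg
  refine ⟨B⁻¹ * D * B⁻¹, ?_, ?_⟩
  · simpa only [hB.inv.isHermitian.eq] using
      (posDef_sqrt hBAB).conjTranspose_mul_mul_same (mulVec_injective_of_isUnit hB.inv.isUnit)
  · calc B⁻¹ * D * B⁻¹ * M * (B⁻¹ * D * B⁻¹)
        = B⁻¹ * D * (B⁻¹ * B) * (B * B⁻¹) * D * B⁻¹ := by simp only [← hBB, mul_assoc]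
      _ = B⁻¹ * (D * D) * B⁻¹ := by
        simp only [nonsing_inv_mul B hBdet, mul_nonsing_inv B hBdet, mul_one, mul_assoc]
      _ = (B⁻¹ * B) * A * (B * B⁻¹) := by simp only [hDD, mul_assoc]
      _ = A := by rw [nonsing_inv_mul B hBdet, mul_nonsing_inv B hBdet, one_mul, mul_one]

end Riccati

section Symplectic

open scoped MatrixOrder

variable {l : Type*} [Fintype l] [DecidableEq l]

theorem J_mul_transpose_J (R : Type*) [CommRing R] : J l R * (J l R)ᵀ = 1 := by
  rw [J_transpose, mul_neg, J_squared, neg_neg]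

theorem transpose_J_mul_inv_mul_J_eq_iff {R : Type*} [CommRing R]
    {S : Matrix (l ⊕ l) (l ⊕ l) R} (hS : Sᵀ = S) (hdet : IsUnit S.det) :
    (J l R)ᵀ * S⁻¹ * J l R = S ↔ S ∈ symplecticGroup l R := by
  constructor
  · intro h
    rw [SymplecticGroup.mem_iff]
    calc S * J l R * Sᵀ = S * J l R * ((J l R)ᵀ * S⁻¹ * J l R) := by rw [hS, h]
      _ = S * (J l R * (J l R)ᵀ) * S⁻¹ * J l R := by simp only [mul_assoc]
      _ = J l R := by rw [J_mul_transpose_J, mul_one, mul_nonsing_inv S hdet, one_mul]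
  · intro h
    calc (J l R)ᵀ * S⁻¹ * J l R = -(J l R * J l R) * S * -(J l R * J l R) := by
          rw [SymplecticGroup.inv_eq_symplectic_inv S h, hS, J_transpose]
          simp only [neg_mul, mul_neg, mul_assoc]
      _ = S := by rw [J_squared, neg_neg, one_mul, mul_one]

section PosDef

variable {M P S : Matrix (l ⊕ l) (l ⊕ l) ℝ}

theorem posDef_transpose_J_mul_mul_J (hM : M.PosDef) : ((J l ℝ)ᵀ * M * J l ℝ).PosDef := by
  have hJ : IsUnit (J l ℝ) := (isUnit_iff_isUnit_det _).2 (isUnit_det_J l ℝ)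
  simpa only [conjTranspose_eq_transpose_of_trivial] using
    hM.conjTranspose_mul_mul_same (mulVec_injective_of_isUnit hJ)

/-- `P` and `Jᵀ P⁻¹ J` solve the same Riccati equation. -/
theorem mem_symplecticGroup_of_mul_mul_self_eq (hM : M.PosDef) (hP : P.PosDef)
    (h : P * M * P = (J l ℝ)ᵀ * M * J l ℝ) : P ∈ symplecticGroup l ℝ := by
  have hdet : IsUnit P.det := (isUnit_iff_isUnit_det P).1 hP.isUnit
  refine (transpose_J_mul_inv_mul_J_eq_iff hP.isHermitian hdet).1 ?_
  refine posSemidef_eq_of_mul_mul_self_eq hM (posDef_transpose_J_mul_mul_J hP.inv).posSemidef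
    hP.posSemidef ?_
  calc (J l ℝ)ᵀ * P⁻¹ * J l ℝ * M * ((J l ℝ)ᵀ * P⁻¹ * J l ℝ)
      = (J l ℝ)ᵀ * (P⁻¹ * ((J l ℝ)ᵀ * M * J l ℝ) * P⁻¹) * J l ℝ := by
        simp only [J_transpose, neg_mul, mul_neg, neg_neg, mul_assoc]
    _ = (J l ℝ)ᵀ * ((P⁻¹ * P) * M * (P * P⁻¹)) * J l ℝ := by simp only [← h, mul_assoc]
    _ = P * M * P := by
        rw [nonsing_inv_mul P hdet, mul_nonsing_inv P hdet, one_mul, mul_one, h]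

theorem mem_symplecticGroup_of_sq_mem (hS : S.PosDef) (h : S ^ 2 ∈ symplecticGroup l ℝ) :
    S ∈ symplecticGroup l ℝ := by
  have hdet : IsUnit S.det := (isUnit_iff_isUnit_det S).1 hS.isUnit
  have hSt_sq : (S ^ 2)ᵀ = S ^ 2 := hS.isHermitian.pow 2
  have hdet_sq : IsUnit (S ^ 2).det := by rw [det_pow]; exact hdet.pow 2
  refine (transpose_J_mul_inv_mul_J_eq_iff hS.isHermitian hdet).1 ?_
  refine posSemidef_eq_of_mul_mul_self_eq PosDef.one
    (posDef_transpose_J_mul_mul_J hS.inv).posSemidef hS.posSemidef ?_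
  calc (J l ℝ)ᵀ * S⁻¹ * J l ℝ * 1 * ((J l ℝ)ᵀ * S⁻¹ * J l ℝ)
      = (J l ℝ)ᵀ * S⁻¹ * (J l ℝ * (J l ℝ)ᵀ) * S⁻¹ * J l ℝ := by simp only [mul_one, mul_assoc]
    _ = (J l ℝ)ᵀ * (S ^ 2)⁻¹ * J l ℝ := by
        rw [J_mul_transpose_J, mul_one, sq, Matrix.mul_inv_rev, ← mul_assoc]
    _ = S ^ 2 := (transpose_J_mul_inv_mul_J_eq_iff hSt_sq hdet_sq).2 h
    _ = S * 1 * S := by rw [mul_one, sq]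

end PosDef

/-- The family `lam` lists the symplectic eigenvalues of `M`: the eigenvalues of `J M` are
`± i lam j`, counted with multiplicity. The characteristic polynomial expresses this over `ℝ`. -/
structure HasSymplecticEigenvalues {κ : Type*} [Fintype κ] (M : Matrix (l ⊕ l) (l ⊕ l) ℝ)
    (lam : κ → ℝ) : Prop where
  pos : ∀ j, 0 < lam j
  charpoly_eq : (J l ℝ * M).charpoly = ∏ j, (X ^ 2 + C (lam j ^ 2))

namespace HasSymplecticEigenvalues

variable {κ : Type*} [Fintype κ] {M S A : Matrix (l ⊕ l) (l ⊕ l) ℝ} {lam : κ → ℝ} {c : ℝ}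

theorem congr (h : HasSymplecticEigenvalues M lam) (hS : S ∈ symplecticGroup l ℝ) :
    HasSymplecticEigenvalues (Sᵀ * M * S) lam where
  pos := h.pos
  charpoly_eq := by
    rw [← h.charpoly_eq, ← mul_assoc, charpoly_mul_comm, ← mul_assoc, ← mul_assoc,
      SymplecticGroup.mem_iff.1 hS]

theorem le_sq_smul_one_iff (h : HasSymplecticEigenvalues M lam) (hA : A.IsHermitian)
    (hAM : A.charpoly = (-(J l ℝ * M) ^ 2).charpoly) (hc : 0 ≤ c) :
    A ≤ c ^ 2 • 1 ↔ ∀ j, lam j ≤ c := by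
  rw [le_smul_one_iff_forall_isRoot_charpoly hA, hAM,
    charpoly_neg_sq_of_charpoly_eq_prod h.charpoly_eq]
  simp only [IsRoot.def, eval_pow, eval_prod, eval_sub, eval_X, eval_C, sq_eq_zero_iff,
    Finset.prod_eq_zero_iff, Finset.mem_univ, true_and, sub_eq_zero, forall_exists_index,
    forall_eq_apply_imp_iff, sq_le_sq₀ (h.pos _).le hc]

theorem le_of_le_smul_one (h : HasSymplecticEigenvalues M lam) (hM : M.PosSemidef) (hc : 0 ≤ c)
    (hMc : M ≤ c • 1) : ∀ j, lam j ≤ c := by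
  set B := CFC.sqrt M
  have hBt : star B = B := (CFC.sqrt_nonneg M).isSelfAdjoint
  have hBB : B * B = M := CFC.sqrt_mul_sqrt_self M hM.nonneg
  have hJB : star (J l ℝ * B) = B * (J l ℝ)ᵀ := by
    rw [star_mul, hBt, star_eq_conjTranspose, conjTranspose_eq_transpose_of_trivial]
  have hle : star (J l ℝ * B) * M * (J l ℝ * B) ≤ c ^ 2 • 1 :=
    calc star (J l ℝ * B) * M * (J l ℝ * B)
        ≤ star (J l ℝ * B) * (c • 1) * (J l ℝ * B) := star_left_conjugate_le_conjugate hMc _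
      _ = c • M := by
        rw [hJB, mul_smul_comm, mul_one, smul_mul_assoc, mul_assoc, ← mul_assoc _ (J l ℝ) B,
          J_transpose, neg_mul, J_squared, neg_neg, one_mul, hBB]
      _ ≤ c • c • 1 := smul_le_smul_of_nonneg_left hMc hc
      _ = c ^ 2 • 1 := by rw [smul_smul, sq]
  have hcharpoly :
      (star (J l ℝ * B) * M * (J l ℝ * B)).charpoly = (-(J l ℝ * M) ^ 2).charpoly :=
    calc (star (J l ℝ * B) * M * (J l ℝ * B)).charpoly
        = (B * ((J l ℝ)ᵀ * M * J l ℝ * B)).charpoly := by rw [hJB]; simp only [mul_assoc]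
      _ = ((J l ℝ)ᵀ * M * J l ℝ * M).charpoly := by rw [charpoly_mul_comm, mul_assoc, hBB]
      _ = (-(J l ℝ * M) ^ 2).charpoly := by simp only [J_transpose, sq, neg_mul, mul_assoc]
  exact (h.le_sq_smul_one_iff (hM.1.isSelfAdjoint.conjugate' _) hcharpoly hc).1 hle

theorem exists_conj_le_smul_one (h : HasSymplecticEigenvalues M lam) (hM : M.PosDef)
    (hc : 0 ≤ c) (hlam : ∀ j, lam j ≤ c) :
    ∃ S ∈ symplecticGroup l ℝ, Sᵀ * M * S ≤ c • 1 := by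
  obtain ⟨P, hP, hPMP⟩ := exists_posDef_mul_mul_self_eq hM (posDef_transpose_J_mul_mul_J hM)
  set S := CFC.sqrt P
  have hS : S.PosDef := posDef_sqrt hP
  have hSt : Sᵀ = S := hS.isHermitian
  have hSS : S * S = P := CFC.sqrt_mul_sqrt_self P hP.posSemidef.nonneg
  have hPsymp : P ∈ symplecticGroup l ℝ := mem_symplecticGroup_of_mul_mul_self_eq hM hP hPMP
  have hSsymp : S ∈ symplecticGroup l ℝ := mem_symplecticGroup_of_sq_mem hS (by rwa [sq, hSS])
  have hSMS : (Sᵀ * M * S).IsHermitian := isHermitian_conjTranspose_mul_mul S hM.isHermitian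
  have hcharpoly : ((Sᵀ * M * S) ^ 2).charpoly = (-(J l ℝ * M) ^ 2).charpoly :=
    calc ((Sᵀ * M * S) ^ 2).charpoly = (S * (M * P * M * S)).charpoly := by
          simp only [hSt, sq, ← hSS, mul_assoc]
      _ = (M * (P * M * P)).charpoly := by rw [charpoly_mul_comm]; simp only [← hSS, mul_assoc]
      _ = (-(J l ℝ * M) ^ 2).charpoly := by
          rw [charpoly_mul_comm, hPMP]
          simp only [J_transpose, sq, neg_mul, mul_assoc]
  exact ⟨S, hSsymp, le_smul_one_of_sq_le hSMS hc
    ((h.le_sq_smul_one_iff (hSMS.pow 2) hcharpoly hc).2 hlam)⟩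

theorem exists_conj_le_smul_one_iff (h : HasSymplecticEigenvalues M lam) (hM : M.PosDef)
    (hc : 0 ≤ c) :
    (∃ S ∈ symplecticGroup l ℝ, Sᵀ * M * S ≤ c • 1) ↔ ∀ j, lam j ≤ c := by
  refine ⟨fun ⟨S, hS, hle⟩ ↦ ?_, h.exists_conj_le_smul_one hM hc⟩
  exact (h.congr hS).le_of_le_smul_one (hM.posSemidef.conjTranspose_mul_mul_same S) hc hle

theorem exists_maps_ball_to_ellipsoid_iff (h : HasSymplecticEigenvalues M lam) (hM : M.PosDef)
    {lam₁ R : ℝ} (hlam₁ : IsGreatest (Set.range lam) lam₁) (hR : 0 < R) :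
    (∃ S ∈ symplecticGroup l ℝ, ∀ z : l ⊕ l → ℝ, √(∑ i, z i ^ 2) ≤ R →
      (M *ᵥ (S *ᵥ z)) ⬝ᵥ (S *ᵥ z) ≤ 1) ↔ R ^ 2 * lam₁ ≤ 1 := by
  have hform (S : Matrix (l ⊕ l) (l ⊕ l) ℝ) (z : l ⊕ l → ℝ) :
      (M *ᵥ (S *ᵥ z)) ⬝ᵥ (S *ᵥ z) = z ⬝ᵥ (Sᵀ * M * S) *ᵥ z := by
    rw [← mulVec_mulVec, ← mulVec_mulVec, mulVec_transpose, dotProduct_comm z, dotProduct_mulVec]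
  have hHermitian (S : Matrix (l ⊕ l) (l ⊕ l) ℝ) : (Sᵀ * M * S).IsHermitian :=
    isHermitian_conjTranspose_mul_mul S hM.isHermitian
  simp only [hform, forall_sqrt_sum_sq_le_imp_iff (hHermitian _) hR,
    h.exists_conj_le_smul_one_iff hM (inv_nonneg.2 (sq_nonneg R))]
  rw [← Set.forall_mem_range (p := (· ≤ (R ^ 2)⁻¹)), ← mem_upperBounds,
    ← isLUB_le_iff hlam₁.isLUB, ← one_div, le_div_iff₀' (sq_pos_of_pos hR)]

end HasSymplecticEigenvalues

end Symplectic

theorem Jmat_eq_transpose_J (n : ℕ) : Jmat n = (J (Fin n) ℝ)ᵀ := by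
  simp [Jmat, J, fromBlocks_transpose]

theorem isSymplectic_iff_mem_symplecticGroup {n : ℕ}
    {S : Matrix (Fin n ⊕ Fin n) (Fin n ⊕ Fin n) ℝ} :
    IsSymplectic S ↔ S ∈ symplecticGroup (Fin n) ℝ := by
  rw [IsSymplectic, Jmat_eq_transpose_J, J_transpose, mul_neg, neg_mul, neg_inj,
    SymplecticGroup.mem_iff']

theorem charpoly_Jmat_mul {n : ℕ} {M : Matrix (Fin n ⊕ Fin n) (Fin n ⊕ Fin n) ℝ} (hM : Mᵀ = M) :
    (Jmat n * M).charpoly = (J (Fin n) ℝ * M).charpoly := by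
  rw [Jmat_eq_transpose_J, ← charpoly_transpose, transpose_mul, transpose_transpose, hM,
    charpoly_mul_comm]

theorem isGreatest_pi_mul_sq {a : ℝ} (ha : 0 < a) :
    IsGreatest {c | ∃ R, 0 < R ∧ c = Real.pi * R ^ 2 ∧ R ^ 2 * a ≤ 1} (Real.pi / a) := by
  constructor
  · refine ⟨√a⁻¹, by positivity, ?_, ?_⟩
    · rw [Real.sq_sqrt (by positivity), div_eq_mul_inv]
    · rw [Real.sq_sqrt (by positivity), inv_mul_cancel₀ ha.ne']
  · rintro _ ⟨R, -, rfl, hR⟩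
    rw [div_eq_mul_one_div]
    gcongr
    rwa [le_div_iff₀ ha]

/-- Linear symplectic capacity of an ellipsoid: a symplectic matrix maps the closed
Euclidean ball of radius `R` into the ellipsoid `{Mz·z ≤ 1}` if and only if `R²λ₁ ≤ 1`,
where `λ₁` is the largest symplectic eigenvalue of `M`; consequently the linear symplectic
capacity `sup {πR² : ∃ S symplectic, S(B(R)) ⊆ {Mz·z ≤ 1}}` equals `π/λ₁`. -/
theorem linear_symplectic_capacity_ellipsoid (n : ℕ) (hn : 0 < n)
    (M : Matrix (Fin n ⊕ Fin n) (Fin n ⊕ Fin n) ℝ) (hM : M.PosDef)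
    (lam : Fin n → ℝ) (hlam : ∀ j, 0 < lam j)
    (hspec : (Jmat n * M).charpoly = ∏ j : Fin n, (X ^ 2 + C (lam j ^ 2)))
    (lam1 : ℝ) (hlam1 : IsGreatest (Set.range lam) lam1)
    (R : ℝ) (hR : 0 < R) :
    ((∃ S : Matrix (Fin n ⊕ Fin n) (Fin n ⊕ Fin n) ℝ, IsSymplectic S ∧
        ∀ z : Fin n ⊕ Fin n → ℝ, Real.sqrt (∑ i, z i ^ 2) ≤ R →
          M.mulVec (S.mulVec z) ⬝ᵥ S.mulVec z ≤ 1) ↔ R ^ 2 * lam1 ≤ 1) ∧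
    sSup {c : ℝ | ∃ R' : ℝ, 0 < R' ∧ c = Real.pi * R' ^ 2 ∧
        ∃ S : Matrix (Fin n ⊕ Fin n) (Fin n ⊕ Fin n) ℝ, IsSymplectic S ∧
          ∀ z : Fin n ⊕ Fin n → ℝ, Real.sqrt (∑ i, z i ^ 2) ≤ R' →
            M.mulVec (S.mulVec z) ⬝ᵥ S.mulVec z ≤ 1} = Real.pi / lam1 := by
  have hM' : HasSymplecticEigenvalues M lam :=
    ⟨hlam, (charpoly_Jmat_mul hM.isHermitian).symm.trans hspec⟩
  have hball {r : ℝ} (hr : 0 < r) := hM'.exists_maps_ball_to_ellipsoid_iff hM hlam1 hr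
  simp only [isSymplectic_iff_mem_symplecticGroup]
  refine ⟨hball hR, ?_⟩
  have hlam1pos : 0 < lam1 := by
    obtain ⟨j, rfl⟩ := hlam1.1
    exact hlam j
  rw [← (isGreatest_pi_mul_sq hlam1pos).csSup_eq]
  congr 1 with c
  exact exists_congr fun r ↦ and_congr_right fun hr ↦ and_congr_right fun _ ↦ hball hr
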